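/- Exclusive priorities of tokens satisfying the Prefix Last-Token Condition: let s be a nonempty string and let t be a non-atomic canonical token that is a suffix of s and satisfies the Prefix Last-Token Condition with respect to s, with canonical rule r_j. Then the token list φ_{j−1}(s) ends with exactly the two tokens pre(t) and suc(t); that is, φ_{j−1}(s) = η ++ [pre(t), suc(t)] for some token list η. -/

import Mathlib

/-!
Common BPE formalization preamble.

A token is a (nonempty) string over the alphabet `α`, modeled as `List α`.
A merge rule is a pair of tokens; a dictionary is an ordered list of rules
(earlier rules have strictly higher priority).
-/

namespace BPE

variable {α : Type*} [DecidableEq α]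

/-- A token is a string over the alphabet (nonemptiness is imposed by hypotheses). -/
abbrev Token (α : Type*) := List α

/-- A merge rule is an ordered pair of tokens. -/
abbrev Rule (α : Type*) := Token α × Token α

/-- A dictionary is an ordered list of merge rules; earlier = higher priority. -/
abbrev Dict (α : Type*) := List (Rule α)

/-- Apply a single merge rule to a token list, scanning left to right and replacing
each adjacent occurrence of `r.1` followed by `r.2` by the concatenated token,
resuming the scan after the newly formed token (no overlaps). -/
def applyRule (r : Rule α) : List (Token α) → List (Token α)
  | [] => []
  | [t] => [t]
  | t :: u :: rest =>
      if t = r.1 ∧ u = r.2 then (r.1 ++ r.2) :: applyRule r rest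
      else t :: applyRule r (u :: rest)

/-- `φ₀(s)`: the list of single-character tokens of `s`. -/
def phi0 (s : List α) : List (Token α) := s.map (fun c => [c])

/-- `φ_k(s)`: the token list after applying the first `k` rules of `D` to `s`. -/
def phiK (D : Dict α) (k : ℕ) (s : List α) : List (Token α) :=
  (D.take k).foldl (fun φ r => applyRule r φ) (phi0 s)

/-- The BPE tokenization `𝕋_D(s)`. -/
def tokenize (D : Dict α) (s : List α) : List (Token α) :=
  phiK D D.length s

/-- Detokenization `π`: concatenation of the tokens. -/
def detok (φ : List (Token α)) : List α := φ.flatten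

/-- A dictionary is valid if all rule components are genuine (nonempty) tokens. -/
def ValidDict (D : Dict α) : Prop := ∀ r ∈ D, r.1 ≠ [] ∧ r.2 ≠ []

/-- A token `t` is canonical if `𝕋_D(t) = [t]`. -/
def IsCanonical (D : Dict α) (t : Token α) : Prop := tokenize D t = [t]

/-- The last token `θ(s)`: last element of `𝕋_D(s)` (defaulting to `[]`). -/
def theta (D : Dict α) (s : List α) : Token α := (tokenize D s).getLastD []

/-- `j` (0-based) is the index of the canonical rule of `t`:
`φ_j(t)` has exactly two tokens and `φ_{j+1}(t) = [t]`. -/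
def IsCanonicalRuleIdx (D : Dict α) (t : Token α) (j : ℕ) : Prop :=
  j < D.length ∧ (phiK D j t).length = 2 ∧ phiK D (j + 1) t = [t]

open Classical in
/-- The (0-based) index of the canonical rule of `t` (junk value `0` if none exists). -/
noncomputable def canonIdx (D : Dict α) (t : Token α) : ℕ :=
  if h : ∃ j, IsCanonicalRuleIdx D t j then h.choose else 0

/-- Predecessor `pre(t)`: first token of the two-token stage `φ_{j-1}(t)`. -/
noncomputable def pre (D : Dict α) (t : Token α) : Token α :=
  (phiK D (canonIdx D t) t).headD []

/-- Successor `suc(t)`: second token of the two-token stage `φ_{j-1}(t)`. -/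
noncomputable def suc (D : Dict α) (t : Token α) : Token α :=
  (phiK D (canonIdx D t) t).getLastD []

/-- `InPath D x a` means `a ∈ P(x)`: `a` is obtained from `x` by iterating `suc`,
i.e. `a` lies on the ancestor path of `x` in the Successor Forest. -/
def InPath (D : Dict α) (x a : Token α) : Prop :=
  ∃ n : ℕ, (suc D)^[n] x = a

/-- `s` with the suffix `u` removed. -/
def dropSuffix (s u : List α) : List α := s.take (s.length - u.length)

/-- The Prefix Last-Token Condition of the canonical suffix token `t`
with respect to the string `s`. Atomic tokens satisfy it by definition;
a non-atomic token must satisfy Reachability and Priority dominance. -/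
def PLTC (D : Dict α) (s t : Token α) : Prop :=
  t.length = 1 ∨
    (1 < t.length ∧
      InPath D (theta D (dropSuffix s (suc D t))) (pre D t) ∧
      (theta D (dropSuffix s (suc D t)) ≠ pre D t →
        ∀ u : Token α, 1 < u.length → IsCanonical D u → suc D u = pre D t →
          InPath D (theta D (dropSuffix s (suc D t))) u →
          canonIdx D t < canonIdx D u))



theorem applyRule_flatten (r : Rule α) (φ : List (Token α)) :
    (applyRule r φ).flatten = φ.flatten := by
  induction φ using applyRule.induct r with
  | case1 => simp [applyRule]
  | case2 t => simp [applyRule]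
  | case3 t u rest h ih =>
    obtain ⟨rfl, rfl⟩ := h
    simp [applyRule, ih]
  | case4 t u rest h ih =>
    rw [applyRule, if_neg h]
    simpa using ih

theorem applyRule_split (r : Rule α) (φ : List (Token α)) :
    ∀ P Q, applyRule r φ = P ++ Q →
      ∃ A B, φ = A ++ B ∧ applyRule r A = P ∧ applyRule r B = Q := by
  induction φ using applyRule.induct r with
  | case1 =>
    intro P Q h
    simp [applyRule] at h
    exact ⟨[], [], by simp [applyRule, h]⟩
  | case2 t =>
    intro P Q h
    cases P with
    | nil => exact ⟨[], [t], by simpa [applyRule] using h⟩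
    | cons p P =>
      simp [applyRule] at h
      obtain ⟨rfl, rfl, rfl⟩ := h
      exact ⟨[t], [], by simp [applyRule]⟩
  | case3 t u rest hc ih =>
    intro P Q h
    cases P with
    | nil => exact ⟨[], t :: u :: rest, by simp, by simp [applyRule], by simpa using h⟩
    | cons p P =>
      rw [applyRule, if_pos hc] at h
      simp only [List.cons_append, List.cons.injEq] at h
      obtain ⟨A, B, h1, h2, h3⟩ := ih P Q h.2
      refine ⟨t :: u :: A, B, by simp [h1], ?_, h3⟩
      rw [applyRule, if_pos hc, h2, h.1]
  | case4 t u rest hc ih =>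
    intro P Q h
    cases P with
    | nil => exact ⟨[], t :: u :: rest, by simp, by simp [applyRule], by simpa using h⟩
    | cons p P =>
      rw [applyRule, if_neg hc] at h
      simp only [List.cons_append, List.cons.injEq] at h
      obtain ⟨A, B, h1, h2, h3⟩ := ih P Q h.2
      refine ⟨t :: A, B, by simp [h1], ?_, h3⟩
      cases A with
      | nil => simp [applyRule] at h2; simp [applyRule, ← h2, h.1]
      | cons a A =>
        simp only [List.cons_append, List.cons.injEq] at h1
        rw [← h1.1] at h2 ⊢
        rw [applyRule, if_neg hc, h2, h.1]

theorem applyRule_extend (r : Rule α) (hr : r.2 ≠ []) (X Y : List (Token α)) (hX : X ≠ [])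
    (A : List (Token α)) :
    applyRule r (A ++ X) = applyRule r A ++ applyRule r X →
    applyRule r (A ++ (X ++ Y)) = applyRule r A ++ applyRule r (X ++ Y) := by
  induction A using applyRule.induct r with
  | case1 => simp [applyRule]
  | case2 t =>
    obtain ⟨x, X, rfl⟩ := List.exists_cons_of_ne_nil hX
    intro h
    by_cases hc : t = r.1 ∧ x = r.2
    · simp [applyRule, hc] at h
      exact absurd h.1 hr
    · simp only [List.cons_append, List.nil_append]
      rw [show applyRule r [t] = [t] by simp [applyRule]]
      rw [applyRule, if_neg hc]
      rfl
  | case3 t u rest hc ih =>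
    intro h
    simp only [List.cons_append] at h ⊢
    rw [applyRule, if_pos hc, applyRule, if_pos hc] at h ⊢
    simp only [List.cons_append, List.cons.injEq, true_and] at h ⊢
    exact ih h
  | case4 t u rest hc ih =>
    intro h
    simp only [List.cons_append] at h ⊢
    rw [applyRule, if_neg hc, applyRule, if_neg hc] at h ⊢
    simp only [List.cons_append, List.cons.injEq, true_and] at h ⊢
    exact ih h

theorem phiK_succ (D : Dict α) (k : ℕ) (hk : k < D.length) (s : List α) :
    phiK D (k + 1) s = applyRule D[k] (phiK D k s) := by
  unfold phiK
  rw [List.take_succ_eq_append_getElem hk, List.foldl_append]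
  rfl

theorem phiK_succ_ge (D : Dict α) (k : ℕ) (hk : D.length ≤ k) (s : List α) :
    phiK D (k + 1) s = phiK D k s := by
  unfold phiK
  rw [List.take_of_length_le hk, List.take_of_length_le (by omega)]

theorem phi0_flatten (s : List α) : (phi0 s).flatten = s := by
  induction s with
  | nil => rfl
  | cons a s ih => simpa [phi0] using ih

theorem phiK_flatten (D : Dict α) (k : ℕ) (s : List α) : (phiK D k s).flatten = s := by
  induction k with
  | zero => exact phi0_flatten s
  | succ k ih =>
    by_cases hk : k < D.length
    · rw [phiK_succ D k hk, applyRule_flatten, ih]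
    · rw [phiK_succ_ge D k (by omega), ih]

theorem phiK_ne_nil (D : Dict α) (k : ℕ) (s : List α) (hs : s ≠ []) : phiK D k s ≠ [] := by
  intro h
  have := phiK_flatten D k s
  rw [h] at this
  exact hs this.symm

theorem phiK_nil (D : Dict α) (k : ℕ) : phiK D k ([] : List α) = [] := by
  induction k with
  | zero => rfl
  | succ k ih =>
    by_cases hk : k < D.length
    · rw [phiK_succ D k hk, ih, applyRule]
    · rw [phiK_succ_ge D k (by omega), ih]

/-- Boundaries present at stage `k` split the tokenization. -/
theorem phiK_split (D : Dict α) (u v : List α) (k : ℕ) :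
    ∀ P Q, phiK D k (u ++ v) = P ++ Q → P.flatten = u →
      P = phiK D k u ∧ Q = phiK D k v := by
  induction k with
  | zero =>
    intro P Q h hP
    change phi0 (u ++ v) = P ++ Q at h
    change P = phi0 u ∧ Q = phi0 v
    unfold phi0 at h
    obtain ⟨a, b, h1, h2, h3⟩ := List.map_eq_append_iff.1 h
    change phi0 a = P at h2
    change phi0 b = Q at h3
    have : a = u := by rw [← phi0_flatten a, h2, hP]
    subst this
    have : v = b := List.append_cancel_left h1
    subst this
    exact ⟨h2.symm, h3.symm⟩
  | succ k ih =>
    intro P Q h hP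
    by_cases hk : k < D.length
    · rw [phiK_succ D k hk] at h ⊢
      rw [phiK_succ D k hk]
      obtain ⟨A, B, h1, h2, h3⟩ := applyRule_split _ _ _ _ h
      obtain ⟨rfl, rfl⟩ := ih A B h1 (by rw [← hP, ← h2, applyRule_flatten])
      exact ⟨h2.symm, h3.symm⟩
    · simp only [phiK_succ_ge D k (not_lt.1 hk)] at h ⊢
      exact ih P Q h hP

/-- The boundary between `u` and `v` survives up to stage `k`. -/
def Bd (D : Dict α) (k : ℕ) (u v : List α) : Prop :=
  phiK D k (u ++ v) = phiK D k u ++ phiK D k v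

theorem Bd.pred {D : Dict α} {k : ℕ} {u v : List α} (h : Bd D (k + 1) u v) : Bd D k u v := by
  unfold Bd at *
  by_cases hk : k < D.length
  · rw [phiK_succ D k hk] at h
    obtain ⟨A, B, h1, h2, h3⟩ := applyRule_split _ _ _ _ h
    obtain ⟨hA, hB⟩ := phiK_split D u v k A B h1
      (by rw [← applyRule_flatten, h2, phiK_flatten])
    rw [h1, hA, hB]
  · simpa only [phiK_succ_ge D k (not_lt.1 hk)] using h

theorem Bd.mono {D : Dict α} {i k : ℕ} {u v : List α} (hik : i ≤ k) (h : Bd D k u v) :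
    Bd D i u v := by
  induction hik with
  | refl => exact h
  | step _ ih => exact ih h.pred

theorem Bd.assoc {D : Dict α} {k : ℕ} {u v w : List α} (h1 : Bd D k u (v ++ w))
    (h2 : Bd D k v w) : Bd D k (u ++ v) w := by
  unfold Bd at *
  have h : phiK D k ((u ++ v) ++ w) = (phiK D k u ++ phiK D k v) ++ phiK D k w := by
    rw [List.append_assoc, h1, h2, List.append_assoc]
  obtain ⟨hA, -⟩ := phiK_split D (u ++ v) w k _ _ h (by simp [phiK_flatten])
  rw [h, hA]

theorem Bd.glue {D : Dict α} (hD : ValidDict D) {w x y : List α} (hx : x ≠ []) (k : ℕ) :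
    Bd D k w x → Bd D k x y →
    phiK D k (w ++ (x ++ y)) = phiK D k w ++ (phiK D k x ++ phiK D k y) := by
  induction k with
  | zero => intro _ _; simp [phiK, phi0]
  | succ k ih =>
    intro h1 h2
    have h := ih h1.pred h2.pred
    by_cases hk : k < D.length
    · have h1' := h1.pred
      have h2' := h2.pred
      unfold Bd at h1 h2 h1' h2'
      rw [phiK_succ D k hk, h1', phiK_succ D k hk, phiK_succ D k hk] at h1
      rw [← h2, phiK_succ D k hk, h, applyRule_extend _ (hD _ (List.getElem_mem hk)).2 _ _
        (phiK_ne_nil D k x hx) _ h1, phiK_succ D k hk, phiK_succ D k hk, h2']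
    · simpa only [phiK_succ_ge D k (not_lt.1 hk)] using h

theorem phiK_single_mono {D : Dict α} {i k : ℕ} {y : List α} (hik : i ≤ k)
    (h : phiK D i y = [y]) : phiK D k y = [y] := by
  induction hik with
  | refl => exact h
  | @step m _ ih =>
    by_cases hk : m < D.length
    · rw [Nat.succ_eq_add_one, phiK_succ D m hk, ih, applyRule]
    · rw [Nat.succ_eq_add_one, phiK_succ_ge D m (by omega), ih]

theorem canonIdx_spec {D : Dict α} {t : Token α} (htl : 1 < t.length) (htc : IsCanonical D t) :
    IsCanonicalRuleIdx D t (canonIdx D t) := by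
  have hex : ∃ j, IsCanonicalRuleIdx D t j := by
    classical
    have hk : ∃ k, phiK D k t = [t] := ⟨_, htc⟩
    have hspec := Nat.find_spec hk
    have hle : Nat.find hk ≤ D.length := Nat.find_min' hk htc
    have hmin := fun m => @Nat.find_min _ _ hk m
    rcases hn : Nat.find hk with _ | j
    · rw [hn] at hspec
      have : (phi0 t).length = 1 := by
        change phi0 t = [t] at hspec
        rw [hspec]; rfl
      simp [phi0] at this
      omega
    · rw [hn] at hspec hle hmin
      have hne := hmin j (by omega)
      refine ⟨j, by omega, ?_, hspec⟩
      have hfl := phiK_flatten D j t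
      rw [phiK_succ D j (by omega)] at hspec
      generalize phiK D j t = φ at *
      match φ with
      | [] => simp [applyRule] at hspec
      | [a] => simp at hfl; simp [hfl] at hne
      | [a, b] => rfl
      | a :: b :: c :: rest =>
        exfalso
        have aux : ∀ a l, applyRule D[j] (a :: l) ≠ [] := by
          intro a l
          cases l with
          | nil => simp [applyRule]
          | cons b l => rw [applyRule]; split <;> simp
        rw [applyRule] at hspec
        split at hspec
        · simp only [List.cons.injEq] at hspec
          exact aux _ _ hspec.2
        · simp only [List.cons.injEq] at hspec
          exact aux _ _ hspec.2
  unfold canonIdx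
  rw [dif_pos hex]
  exact hex.choose_spec

theorem phiK_canonIdx {D : Dict α} {t : Token α} (htl : 1 < t.length) (htc : IsCanonical D t) :
    phiK D (canonIdx D t) t = [pre D t, suc D t] := by
  obtain ⟨_, h, _⟩ := canonIdx_spec htl htc
  obtain ⟨a, b, hab⟩ := List.length_eq_two.1 h
  simp [pre, suc, hab]

theorem pre_append_suc {D : Dict α} {t : Token α} (htl : 1 < t.length) (htc : IsCanonical D t) :
    pre D t ++ suc D t = t := by
  have := phiK_flatten D (canonIdx D t) t
  rw [phiK_canonIdx htl htc] at this
  simpa using this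

theorem phiK_pre_suc {D : Dict α} {t : Token α} (htl : 1 < t.length) (htc : IsCanonical D t) :
    phiK D (canonIdx D t) (pre D t) = [pre D t] ∧
    phiK D (canonIdx D t) (suc D t) = [suc D t] := by
  have h := phiK_split D (pre D t) (suc D t) (canonIdx D t) [pre D t] [suc D t]
    (by rw [pre_append_suc htl htc, phiK_canonIdx htl htc]; rfl) (by simp)
  exact ⟨h.1.symm, h.2.symm⟩

theorem bd_pre_suc {D : Dict α} {t : Token α} (htl : 1 < t.length) (htc : IsCanonical D t) :
    Bd D (canonIdx D t) (pre D t) (suc D t) := by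
  unfold Bd
  rw [pre_append_suc htl htc, phiK_canonIdx htl htc, (phiK_pre_suc htl htc).1,
    (phiK_pre_suc htl htc).2]
  rfl

theorem suc_canonical {D : Dict α} {t : Token α} (htl : 1 < t.length) (htc : IsCanonical D t) :
    IsCanonical D (suc D t) :=
  phiK_single_mono (canonIdx_spec htl htc).1.le (phiK_pre_suc htl htc).2

theorem canonIdx_suc_lt {D : Dict α} {t : Token α} (htl : 1 < t.length) (htc : IsCanonical D t)
    (hl : 1 < (suc D t).length) : canonIdx D (suc D t) < canonIdx D t := by
  by_contra hcon
  have h1 := phiK_single_mono (not_lt.1 hcon) (phiK_pre_suc htl htc).2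
  have h2 := (canonIdx_spec hl (suc_canonical htl htc)).2.1
  rw [h1] at h2
  simp at h2

theorem suc_atomic {D : Dict α} {t : Token α} (htl : ¬ 1 < t.length) (htc : IsCanonical D t) :
    suc D t = t := by
  match t with
  | [] => simp [IsCanonical, tokenize, phiK_nil] at htc
  | [c] =>
    have h : phiK D 0 [c] = [[c]] := rfl
    have := phiK_single_mono (Nat.zero_le (canonIdx D [c])) h
    simp [suc, this]
  | a :: b :: l => simp at htl

theorem path_split {D : Dict α} {z : Token α} (hz : IsCanonical D z) (n : ℕ) :
    IsCanonical D ((suc D)^[n] z) ∧ ∃ v, z = v ++ (suc D)^[n] z ∧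
      ∀ k, (∀ b : Token α, 1 < b.length → IsCanonical D b → suc D b = (suc D)^[n] z →
        InPath D z b → k ≤ canonIdx D b) → Bd D k v ((suc D)^[n] z) := by
  induction n with
  | zero => exact ⟨hz, [], rfl, fun k _ => by simp [Bd, phiK_nil]⟩
  | succ n ih =>
    rw [Function.iterate_succ_apply']
    have hpath : InPath D z ((suc D)^[n] z) := ⟨n, rfl⟩
    generalize (suc D)^[n] z = b at *
    obtain ⟨hb, v, hv, hbd⟩ := ih
    by_cases hl : 1 < b.length
    · refine ⟨suc_canonical hl hb, v ++ pre D b, ?_, ?_⟩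
      · rw [List.append_assoc, pre_append_suc hl hb, ← hv]
      · intro k hk
        have hkb := hk b hl hb rfl hpath
        refine Bd.assoc ?_ ((bd_pre_suc hl hb).mono hkb)
        rw [pre_append_suc hl hb]
        apply hbd
        intro c hc1 hc2 hc3 _
        have := canonIdx_suc_lt hc1 hc2 (by rw [hc3]; exact hl)
        rw [hc3] at this
        omega
    · rw [suc_atomic hl hb]
      exact ⟨hb, v, hv, hbd⟩

/-- **Exclusive priorities.** If the non-atomic canonical suffix token `t` of the
nonempty string `s` satisfies the Prefix Last-Token Condition with respect to `s`,
then the token list immediately before its canonical rule is applied ends with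
exactly the two tokens `pre t` and `suc t`. -/
theorem exclusive_priorities [Fintype α] (D : Dict α) (hD : ValidDict D)
    (s : List α) (hs : s ≠ [])
    (t : Token α) (htl : 1 < t.length) (htc : IsCanonical D t) (hts : t <:+ s)
    (hplt : PLTC D s t) :
    ∃ η : List (Token α), phiK D (canonIdx D t) s = η ++ [pre D t, suc D t] := by
  rcases hplt with h | ⟨-, ⟨n, hn⟩, hdom⟩
  · omega
  obtain ⟨w0, hw0⟩ := hts
  have hxy := pre_append_suc htl htc
  obtain ⟨hpx, hpy⟩ := phiK_pre_suc htl htc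
  have hbxy := bd_pre_suc htl htc
  have hjm := (canonIdx_spec htl htc).1
  have hdrop : dropSuffix s (suc D t) = w0 ++ pre D t := by
    unfold dropSuffix
    have hs' : s = (w0 ++ pre D t) ++ suc D t := by
      rw [List.append_assoc, hxy, hw0]
    generalize suc D t = y at hs'
    rw [hs', List.length_append, Nat.add_sub_cancel, List.take_left]
  rw [hdrop] at hn hdom
  have hx : pre D t ≠ [] := by
    intro h
    rw [h, phiK_nil] at hpx
    simp at hpx
  have hne : tokenize D (w0 ++ pre D t) ≠ [] := phiK_ne_nil _ _ _ (by simp [hx])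
  have htok : tokenize D (w0 ++ pre D t) =
      (tokenize D (w0 ++ pre D t)).dropLast ++ [theta D (w0 ++ pre D t)] := by
    unfold theta
    conv_lhs => rw [← List.dropLast_append_getLast hne]
    rw [List.getLastD_eq_getLast?, List.getLast?_eq_getLast_of_ne_nil hne]
    rfl
  generalize theta D (w0 ++ pre D t) = z at *
  generalize (tokenize D (w0 ++ pre D t)).dropLast = P at *
  have hfl := phiK_flatten D D.length (w0 ++ pre D t)
  change (tokenize D (w0 ++ pre D t)).flatten = _ at hfl
  rw [htok] at hfl
  have hfl' : P.flatten ++ z = w0 ++ pre D t := by simpa using hfl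
  have hsp := phiK_split D P.flatten z D.length P [z] (by rw [hfl']; exact htok) rfl
  have hzc : IsCanonical D z := hsp.2.symm
  have hbz : Bd D D.length P.flatten z := by
    unfold Bd
    rw [← hsp.1, ← hsp.2, hfl']
    exact htok
  have hv : ∃ v, z = v ++ pre D t ∧ Bd D (canonIdx D t) v (pre D t) := by
    by_cases hzx : z = pre D t
    · exact ⟨[], by simpa using hzx, by simp [Bd, phiK_nil]⟩
    · obtain ⟨-, v, hv1, hv2⟩ := path_split hzc n
      rw [hn] at hv1 hv2
      exact ⟨v, hv1, hv2 _ fun b h1 h2 h3 h4 => (hdom hzx b h1 h2 h3 h4).le⟩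
  obtain ⟨v, rfl, hv⟩ := hv
  have hw : P.flatten ++ v = w0 := by
    rw [← List.append_assoc] at hfl'
    exact List.append_cancel_right hfl'
  have hbw : Bd D (canonIdx D t) w0 (pre D t) := by
    rw [← hw]
    exact (hbz.mono hjm.le).assoc hv
  have := Bd.glue hD hx (canonIdx D t) hbw hbxy
  rw [hxy, hw0, hpx, hpy] at this
  exact ⟨_, this⟩

end BPE
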